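/- Let Z = m_1P_1 + ... + m_sP_s be fat points in P^n whose support is contained in an r-dimensional linear subspace α ≅ P^r, and let Z_α be the corresponding fat points in P^r. If there is a non-negative integer b such that reg(Z_α) > b, then reg(Z) > b. -/

import Mathlib

open MvPolynomial

noncomputable section

/-- The defining prime ideal of the point of projective space with homogeneous
coordinates `p`: the ideal generated by the linear forms vanishing at `p`. -/
def pointIdeal {K : Type} [Field K] {N : ℕ} (p : Fin N → K) :
    Ideal (MvPolynomial (Fin N) K) :=
  Ideal.span {f | f.IsHomogeneous 1 ∧ eval p f = 0}

/-- The ideal of the fat point scheme `m₁P₁ + ⋯ + m_sP_s`. -/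
def fatIdeal {K : Type} [Field K] {N s : ℕ} (p : Fin s → Fin N → K) (m : Fin s → ℕ) :
    Ideal (MvPolynomial (Fin N) K) :=
  ⨅ i, pointIdeal (p i) ^ (m i)

/-- `dim_K` of the degree-`t` graded piece of the ideal `I`. -/
def gradedDim (K : Type) [Field K] {N : ℕ} (I : Ideal (MvPolynomial (Fin N) K)) (t : ℕ) : ℕ :=
  Module.finrank K ↥(homogeneousSubmodule (Fin N) K t ⊓ I.restrictScalars K)

/-- The Hilbert function of `R/I` in degree `t`. -/
def hilbFn (K : Type) [Field K] {N : ℕ} (I : Ideal (MvPolynomial (Fin N) K)) (t : ℕ) : ℕ :=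
  Module.finrank K ↥(homogeneousSubmodule (Fin N) K t) - gradedDim K I t

/-- The regularity index of `R/I` relative to the multiplicity `e`:
the least `t` with `H_{R/I}(t) = e`. -/
def regIndex (K : Type) [Field K] {N : ℕ} (I : Ideal (MvPolynomial (Fin N) K)) (e : ℕ) : ℕ :=
  sInf {t | hilbFn K I t = e}

/-- The multiplicity `e(R/I) = ∑ C(mᵢ+n-1, n)` of a fat point scheme in `ℙⁿ`. -/
def fatMult (n : ℕ) {s : ℕ} (m : Fin s → ℕ) : ℕ :=
  ∑ i, (m i + n - 1).choose n

/-- The regularity index of the fat point scheme `m₁P₁ + ⋯ + m_sP_s` in `ℙⁿ`. -/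
def regFat (K : Type) [Field K] {n s : ℕ} (p : Fin s → Fin (n + 1) → K) (m : Fin s → ℕ) : ℕ :=
  regIndex K (fatIdeal p m) (fatMult n m)

/-- The coordinate vectors `p i` represent distinct points of projective space. -/
def ProjDistinct {K : Type} [Field K] {N s : ℕ} (p : Fin s → Fin N → K) : Prop :=
  (∀ i, p i ≠ 0) ∧ ∀ i j, i ≠ j → ∀ c : K, p i ≠ c • p j

/-- The points `p i`, `i ∈ Q`, lie on a `j`-dimensional linear subspace of `ℙⁿ`. -/
def OnLinearSubspace {K : Type} [Field K] {N s : ℕ} (p : Fin s → Fin N → K)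
    (Q : Finset (Fin s)) (j : ℕ) : Prop :=
  ∃ W : Submodule K (Fin N → K), Module.finrank K ↥W ≤ j + 1 ∧ ∀ i ∈ Q, p i ∈ W

open Classical in
/-- The Segre bound `T(Z) = max {T_j(Z) | j = 1,…,n}` for fat points in `ℙⁿ`. -/
def segreBound {K : Type} [Field K] (n : ℕ) {s : ℕ} (p : Fin s → Fin (n + 1) → K)
    (m : Fin s → ℕ) : ℕ :=
  (Finset.Icc 1 n).sup fun j =>
    Finset.univ.powerset.sup fun Q =>
      if Q.Nonempty ∧ OnLinearSubspace p Q j then (∑ i ∈ Q, m i + j - 2) / j else 0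

/-- The standard coordinate point `(1,0,…,0)`. -/
def stdPt (K : Type) [Field K] (N : ℕ) : Fin N → K := fun j => if (j : ℕ) = 0 then 1 else 0

/-!
Let `℘ᵢ` be the ideal of `Pᵢ` and `Z = ∑ mᵢPᵢ` in `ℙⁿ`. The Hilbert function of `R ⧸ ⋂ ℘ᵢ^mᵢ`
takes the value `e(Z) = ∑ C(mᵢ+n-1, n)` at `t` if and only if `R_t → ∏ (R ⧸ ℘ᵢ^mᵢ)_t` is surjective
and each `R ⧸ ℘ᵢ^mᵢ` has Hilbert function `C(mᵢ+n-1, n)` at `t`, which means `n = 0` or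
`mᵢ ≤ t + 1`. Restricting forms from `ℙⁿ` to a linear subspace carries `R_t` onto `(R_α)_t` and the
ideals of the points in `ℙⁿ` into their ideals in the subspace, so both conditions descend from `Z`
to `Z_α`. Both hold for `Z` in all large degrees, the first one by the Chinese remainder theorem, so
they hold for `Z` in degree `reg(Z)`, and hence for `Z_α` in that degree.
-/

section LinearAlgebra

variable {K V ι : Type*} [Field K] [AddCommGroup V] [Module K V]

lemma exists_linearEquiv_apply_eq {x y : V} (hx : x ≠ 0) (hy : y ≠ 0) :
    ∃ A : V ≃ₗ[K] V, A x = y := by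
  let f := LinearEquiv.toSpanNonzeroSingleton K V x hx
  let g := LinearEquiv.toSpanNonzeroSingleton K V y hy
  obtain ⟨A, hA⟩ := Submodule.exists_linearEquiv_restrict_eq (f.symm.trans g)
  have hf : (f 1 : V) = x := one_smul K x
  have hg : (g 1 : V) = y := one_smul K y
  refine ⟨A, ?_⟩
  rw [← hf, ← hg, ← hA, LinearEquiv.trans_apply, f.symm_apply_apply]

lemma exists_linearMap_apply_eq_zero_apply_eq_self {x y : V} (hy : ∀ c : K, y ≠ c • x) :
    ∃ π : V →ₗ[K] V, π x = 0 ∧ π y = y := by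
  have hy' : y ∉ Submodule.span K {x} := fun h =>
    have ⟨c, hc⟩ := Submodule.mem_span_singleton.1 h
    hy c hc.symm
  obtain ⟨f, hfy, hfx⟩ := Submodule.exists_le_ker_of_notMem hy'
  have hfx : f x = 0 := hfx (Submodule.mem_span_singleton_self x)
  exact ⟨f.smulRight ((f y)⁻¹ • y), by simp [hfx], by simp [smul_smul, hfy]⟩

variable (U : ι → Submodule K V)

lemma finrank_quotient_iInf : Module.finrank K (V ⧸ ⨅ i, U i) =
    Module.finrank K (LinearMap.range (LinearMap.pi fun i => (U i).mkQ)) := by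
  have hker : LinearMap.ker (LinearMap.pi fun i => (U i).mkQ) = ⨅ i, U i := by
    simp [LinearMap.ker_pi]
  rw [← hker]
  exact (LinearMap.quotKerEquivRange _).finrank_eq

variable [Fintype ι] [FiniteDimensional K V]

lemma finrank_quotient_iInf_le_sum :
    Module.finrank K (V ⧸ ⨅ i, U i) ≤ ∑ i, Module.finrank K (V ⧸ U i) := by
  rw [finrank_quotient_iInf, ← Module.finrank_pi_fintype]
  exact Submodule.finrank_le _

lemma finrank_quotient_iInf_eq_sum_iff :
    Module.finrank K (V ⧸ ⨅ i, U i) = ∑ i, Module.finrank K (V ⧸ U i) ↔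
      Function.Surjective (LinearMap.pi fun i => (U i).mkQ) := by
  rw [finrank_quotient_iInf, ← Module.finrank_pi_fintype, ← LinearMap.range_eq_top]
  exact ⟨Submodule.eq_top_of_finrank_eq, fun h => by rw [h, finrank_top]⟩

end LinearAlgebra

section LinearPullback

variable {R σ τ : Type*} [CommSemiring R] [Fintype σ] [DecidableEq σ]

/-- The pullback of polynomial functions along a linear map of coordinate spaces, as the
substitution of linear forms for the variables. -/
def linearPullback (φ : (σ → R) →ₗ[R] (τ → R)) : MvPolynomial τ R →ₐ[R] MvPolynomial σ R :=
  bind₁ (LinearMap.toMatrix' φ).toMvPolynomial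

lemma linearPullback_isHomogeneous (φ : (σ → R) →ₗ[R] (τ → R)) {f : MvPolynomial τ R} {t : ℕ}
    (hf : f.IsHomogeneous t) : (linearPullback φ f).IsHomogeneous t := by
  rw [← one_mul t]
  exact hf.aeval _ (Matrix.toMvPolynomial_isHomogeneous _)

lemma eval_linearPullback (φ : (σ → R) →ₗ[R] (τ → R)) (f : MvPolynomial τ R) (x : σ → R) :
    eval x (linearPullback φ f) = eval (φ x) f := by
  refine (eval₂Hom_bind₁ (RingHom.id R) x _ f).trans ?_
  change eval (fun i => eval x _) f = _
  simp only [Matrix.toMvPolynomial_eval_eq_apply, LinearMap.toMatrix'_mulVec]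

lemma linearPullback_leftInverse [Fintype τ] [DecidableEq τ] {φ : (σ → R) →ₗ[R] (τ → R)}
    {θ : (τ → R) →ₗ[R] (σ → R)} (h : θ ∘ₗ φ = LinearMap.id) :
    Function.LeftInverse (linearPullback φ) (linearPullback θ) := by
  intro f
  simp only [linearPullback, bind₁_bind₁, ← Matrix.toMvPolynomial_mul, ← LinearMap.toMatrix'_comp,
    h, LinearMap.toMatrix'_id, Matrix.toMvPolynomial_one, bind₁_X_left, AlgHom.id_apply]

end LinearPullback

section HomogeneousIdeal

variable {R σ ι : Type*} [CommSemiring R]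

lemma prod_sup_le_sup_prod (I : Ideal R) (J : ι → Ideal R) (s : Finset ι) :
    ∏ j ∈ s, (I ⊔ J j) ≤ I ⊔ ∏ j ∈ s, J j := by
  classical
  induction s using Finset.induction_on with
  | empty => simp
  | insert a s ha ih =>
    rw [Finset.prod_insert ha, Finset.prod_insert ha]
    calc (I ⊔ J a) * ∏ j ∈ s, (I ⊔ J j) ≤ (I ⊔ J a) * (I ⊔ ∏ j ∈ s, J j) := Ideal.mul_mono_right ih
      _ = I * (I ⊔ ∏ j ∈ s, J j) ⊔ (J a * I ⊔ J a * ∏ j ∈ s, J j) := by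
        rw [Ideal.sup_mul, Ideal.mul_sup (J a)]
      _ ≤ I ⊔ J a * ∏ j ∈ s, J j :=
        sup_le (Ideal.mul_le_left.trans le_sup_left)
          (sup_le_sup_right Ideal.mul_le_right _)

lemma isHomogeneous_mem_pow_idealOfVars {f : MvPolynomial σ R} {t : ℕ} (hf : f.IsHomogeneous t) :
    f ∈ idealOfVars σ R ^ t := by
  rw [mem_pow_idealOfVars_iff']
  exact fun d hd => hf.coeff_eq_zero hd.ne

attribute [local instance] MvPolynomial.gradedAlgebra in
lemma ideal_pow_isHomogeneous {I : Ideal (MvPolynomial σ R)}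
    (hI : I.IsHomogeneous (homogeneousSubmodule σ R)) (m : ℕ) :
    (I ^ m).IsHomogeneous (homogeneousSubmodule σ R) := by
  induction m with
  | zero => simpa only [pow_zero, Ideal.one_eq_top] using Ideal.IsHomogeneous.top _
  | succ m ih => exact pow_succ I m ▸ ih.mul hI

end HomogeneousIdeal

section SurjectsInDegree

variable {R σ ι : Type*} [CommRing R]

/-- The family of ideals `I i` of `S = R[X]` is such that `S_t → ∏ i, (S ⧸ I i)_t` is surjective.
For the ideals of fat points this says that they impose independent conditions on forms of
degree `t`. -/
def SurjectsInDegree (I : ι → Ideal (MvPolynomial σ R)) (t : ℕ) : Prop :=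
  ∀ g : ι → MvPolynomial σ R, (∀ i, (g i).IsHomogeneous t) →
    ∃ f : MvPolynomial σ R, f.IsHomogeneous t ∧ ∀ i, f - g i ∈ I i

lemma SurjectsInDegree.of_map_linearPullback_le {τ : Type*} [Fintype σ] [DecidableEq σ] [Fintype τ]
    [DecidableEq τ] {I : ι → Ideal (MvPolynomial τ R)} {J : ι → Ideal (MvPolynomial σ R)} {t : ℕ}
    {φ : (σ → R) →ₗ[R] (τ → R)} {θ : (τ → R) →ₗ[R] (σ → R)}
    (h : Function.LeftInverse (linearPullback φ) (linearPullback θ))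
    (hIJ : ∀ i, (I i).map (linearPullback φ) ≤ J i) (hI : SurjectsInDegree I t) :
    SurjectsInDegree J t := by
  intro g hg
  obtain ⟨f, hf, hfg⟩ := hI (fun i => linearPullback θ (g i))
    fun i => linearPullback_isHomogeneous θ (hg i)
  refine ⟨linearPullback φ f, linearPullback_isHomogeneous φ hf, fun i => ?_⟩
  simpa only [map_sub, h (g i)] using hIJ i (Ideal.mem_map_of_mem _ (hfg i))

attribute [local instance] MvPolynomial.gradedAlgebra

lemma exists_isHomogeneous_sub_mem_of_mem_sup {I J : Ideal (MvPolynomial σ R)}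
    (hI : I.IsHomogeneous (homogeneousSubmodule σ R))
    (hJ : J.IsHomogeneous (homogeneousSubmodule σ R))
    {g : MvPolynomial σ R} {t : ℕ} (hg : g.IsHomogeneous t) (hgIJ : g ∈ I ⊔ J) :
    ∃ f : MvPolynomial σ R, f.IsHomogeneous t ∧ f - g ∈ I ∧ f ∈ J := by
  obtain ⟨x, hx, y, hy, rfl⟩ := Submodule.mem_sup.1 hgIJ
  refine ⟨homogeneousComponent t y, homogeneousComponent_isHomogeneous _ _, ?_,
    homogeneousComponent_mem_of_mem hJ hy t⟩
  have hsub : homogeneousComponent t y - (x + y) = -homogeneousComponent t x := by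
    conv_lhs => rw [← homogeneousComponent_eq_self hg, map_add]
    ring
  exact hsub ▸ neg_mem (homogeneousComponent_mem_of_mem hI hx t)

lemma surjectsInDegree_of_pow_le_sup [Fintype ι] [DecidableEq ι]
    {I : ι → Ideal (MvPolynomial σ R)}
    (hI : ∀ i, (I i).IsHomogeneous (homogeneousSubmodule σ R)) {k : ι → ι → ℕ}
    (hk : ∀ i j, i ≠ j → idealOfVars σ R ^ k i j ≤ I i ⊔ I j) {t : ℕ}
    (ht : ∀ i, ∑ j ∈ Finset.univ.erase i, k i j ≤ t) : SurjectsInDegree I t := by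
  intro g hg
  have hsup : ∀ i, g i ∈ I i ⊔ ⨅ j ∈ Finset.univ.erase i, I j := by
    intro i
    refine (calc
      idealOfVars σ R ^ t ≤ idealOfVars σ R ^ ∑ j ∈ Finset.univ.erase i, k i j :=
        Ideal.pow_le_pow_right (ht i)
      _ = ∏ j ∈ Finset.univ.erase i, idealOfVars σ R ^ k i j := by
        rw [Finset.prod_pow_eq_pow_sum]
      _ ≤ ∏ j ∈ Finset.univ.erase i, (I i ⊔ I j) :=
        Finset.prod_le_prod' fun j hj => hk i j (Finset.ne_of_mem_erase hj).symm
      _ ≤ I i ⊔ ∏ j ∈ Finset.univ.erase i, I j := prod_sup_le_sup_prod _ _ _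
      _ ≤ I i ⊔ ⨅ j ∈ Finset.univ.erase i, I j := by
        rw [← Finset.inf_eq_iInf]
        exact sup_le_sup_left Ideal.prod_le_inf _) (isHomogeneous_mem_pow_idealOfVars (hg i))
  choose f hf hfi hfj using fun i => exists_isHomogeneous_sub_mem_of_mem_sup (hI i)
    (Ideal.IsHomogeneous.iInf₂ fun j (_ : j ∈ Finset.univ.erase i) => hI j) (hg i) (hsup i)
  simp only [Ideal.mem_iInf] at hfj
  refine ⟨∑ i, f i, IsHomogeneous.sum _ _ _ fun i _ => hf i, fun i => ?_⟩
  rw [← Finset.add_sum_erase _ _ (Finset.mem_univ i), add_sub_right_comm]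
  exact add_mem (hfi i) (sum_mem fun j hj =>
    hfj j i (Finset.mem_erase.2 ⟨(Finset.ne_of_mem_erase hj).symm, Finset.mem_univ i⟩))

end SurjectsInDegree

section MonomialCount

lemma finrank_restrictSupport {R σ : Type*} [CommRing R] [Nontrivial R] (S : Set (σ →₀ ℕ)) :
    Module.finrank R (restrictSupport R S) = S.ncard := by
  rw [Module.finrank_eq_nat_card_basis (basisRestrictSupport R S), Nat.card_coe_set_eq]

lemma degree_eq_add_degree_tail {M : Type*} [AddCommMonoid M] {n : ℕ} (d : Fin (n + 1) →₀ M) :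
    d.degree = d 0 + d.tail.degree := by
  simp only [Finsupp.degree_eq_sum, Fin.sum_univ_succ, Finsupp.tail_apply]

lemma mapDomain_succ_le_iff {n : ℕ} {e : Fin n →₀ ℕ} {d : Fin (n + 1) →₀ ℕ} :
    e.mapDomain Fin.succ ≤ d ↔ e ≤ d.tail := by
  simp only [Finsupp.le_def, Fin.forall_fin_succ, Finsupp.tail_apply,
    Finsupp.mapDomain_apply (Fin.succ_injective n), and_iff_right_iff_imp]
  intro _
  rw [Finsupp.mapDomain_of_notMem_range _ _ (by simp)]
  exact Nat.zero_le _

lemma ncard_degree_eq (n t : ℕ) :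
    {d : Fin (n + 1) →₀ ℕ | d.degree = t}.ncard = (t + n).choose n := by
  have hset : {d : Fin (n + 1) →₀ ℕ | d.degree = t} =
      Finset.finsuppAntidiag (Finset.univ : Finset (Fin (n + 1))) t := by
    ext d
    simp [Finsupp.degree_eq_sum]
  rw [hset, Set.ncard_coe_finset, Finset.card_finsuppAntidiag_nat_eq_choose, Finset.card_fin,
    show n + 1 + t - 1 = t + n by lia, Nat.choose_symm_add]

lemma ncard_degree_eq_and_degree_tail_le (n t k : ℕ) :
    {d : Fin (n + 1) →₀ ℕ | d.degree = t ∧ d.tail.degree ≤ k}.ncard =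
      {e : Fin n →₀ ℕ | e.degree ≤ min k t}.ncard := by
  have hinj : Set.InjOn Finsupp.tail
      {d : Fin (n + 1) →₀ ℕ | d.degree = t ∧ d.tail.degree ≤ k} := by
    rintro d ⟨hd, -⟩ e ⟨he, -⟩ hde
    rw [degree_eq_add_degree_tail] at hd he
    rw [← d.cons_tail, ← e.cons_tail, hde, show d 0 = e 0 by rw [hde] at hd; lia]
  rw [← hinj.ncard_image]
  congr 1
  ext e
  constructor
  · rintro ⟨d, ⟨hd, hdk⟩, rfl⟩
    rw [degree_eq_add_degree_tail] at hd
    exact le_min hdk (by lia)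
  · intro he
    rw [Set.mem_ofPred_eq, le_min_iff] at he
    refine ⟨e.cons (t - e.degree), ⟨?_, ?_⟩, e.tail_cons _⟩
    · rw [degree_eq_add_degree_tail, Finsupp.cons_zero, Finsupp.tail_cons]
      lia
    · rw [Finsupp.tail_cons]
      exact he.1

lemma ncard_degree_le (n k : ℕ) : {e : Fin n →₀ ℕ | e.degree ≤ k}.ncard = (k + n).choose n := by
  have htail : {d : Fin (n + 1) →₀ ℕ | d.degree = k} =
      {d | d.degree = k ∧ d.tail.degree ≤ k} := by
    ext d
    have := degree_eq_add_degree_tail d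
    simp only [Set.mem_ofPred_eq]
    lia
  rw [← ncard_degree_eq, htail, ncard_degree_eq_and_degree_tail_le, min_self]

lemma strictMono_add_choose {n : ℕ} (hn : n ≠ 0) : StrictMono fun k : ℕ => (k + n).choose n := by
  obtain ⟨l, rfl⟩ := Nat.exists_eq_succ_of_ne_zero hn
  refine strictMono_nat_of_lt_succ fun k => ?_
  rw [show k + 1 + l.succ = (k + l + 1).succ by lia, Nat.choose_succ_succ]
  exact Nat.lt_add_of_pos_left (Nat.choose_pos (by lia))

end MonomialCount

section GradedPiece

variable {R σ : Type*} [CommSemiring R]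

instance finite_homogeneousSubmodule [Finite σ] (t : ℕ) :
    Module.Finite R (homogeneousSubmodule σ R t) :=
  Module.Finite.iff_fg.2 (homogeneousSubmodule_fg _ _ _)

/-- The degree-`t` piece of the ideal `I`, as a submodule of the module of forms of degree `t`. -/
def gradedPiece (I : Ideal (MvPolynomial σ R)) (t : ℕ) : Submodule R (homogeneousSubmodule σ R t) :=
  (I.restrictScalars R).submoduleOf (homogeneousSubmodule σ R t)

lemma mem_gradedPiece {I : Ideal (MvPolynomial σ R)} {t : ℕ} {f : homogeneousSubmodule σ R t} :
    f ∈ gradedPiece I t ↔ (f : MvPolynomial σ R) ∈ I :=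
  Iff.rfl

lemma gradedPiece_iInf {ι : Type*} (I : ι → Ideal (MvPolynomial σ R)) (t : ℕ) :
    gradedPiece (⨅ i, I i) t = ⨅ i, gradedPiece (I i) t := by
  ext f
  simp only [mem_gradedPiece, Ideal.mem_iInf, Submodule.mem_iInf]

end GradedPiece

section HilbertFunction

variable {K : Type} [Field K] {N : ℕ}

lemma hilbFn_eq_finrank_quotient (I : Ideal (MvPolynomial (Fin N) K)) (t : ℕ) :
    hilbFn K I t = Module.finrank K (homogeneousSubmodule (Fin N) K t ⧸ gradedPiece I t) := by
  have hdim : gradedDim K I t = Module.finrank K (gradedPiece I t) := by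
    rw [gradedDim, ← Submodule.map_comap_subtype]
    exact (Submodule.equivMapOfInjective _ (Submodule.injective_subtype _) _).finrank_eq.symm
  rw [hilbFn, hdim, ← Submodule.finrank_quotient_add_finrank (gradedPiece I t),
    Nat.add_sub_cancel]

variable {ι : Type*} [Fintype ι] (I : ι → Ideal (MvPolynomial (Fin N) K)) (t : ℕ)

lemma hilbFn_iInf_le_sum : hilbFn K (⨅ i, I i) t ≤ ∑ i, hilbFn K (I i) t := by
  simp only [hilbFn_eq_finrank_quotient]
  rw [gradedPiece_iInf]
  exact finrank_quotient_iInf_le_sum _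

lemma hilbFn_iInf_eq_sum_iff :
    hilbFn K (⨅ i, I i) t = ∑ i, hilbFn K (I i) t ↔ SurjectsInDegree I t := by
  simp only [hilbFn_eq_finrank_quotient]
  rw [gradedPiece_iInf, finrank_quotient_iInf_eq_sum_iff]
  constructor
  · intro h g hg
    obtain ⟨f, hf⟩ := h fun i => (gradedPiece (I i) t).mkQ ⟨g i, hg i⟩
    exact ⟨f, f.2, fun i => (Submodule.Quotient.eq (gradedPiece (I i) t)).1 (congrFun hf i)⟩
  · intro h y
    choose g hg using fun i => (gradedPiece (I i) t).mkQ_surjective (y i)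
    obtain ⟨f, hf, hfg⟩ := h (fun i => g i) fun i => (g i).2
    exact ⟨⟨f, hf⟩, funext fun i => hg i ▸ (Submodule.Quotient.eq _).2 (hfg i)⟩

end HilbertFunction

section PointIdeal

variable {K : Type} [Field K]

attribute [local instance] MvPolynomial.gradedAlgebra in
lemma pointIdeal_isHomogeneous {N : ℕ} (p : Fin N → K) :
    (pointIdeal p).IsHomogeneous (homogeneousSubmodule (Fin N) K) :=
  Ideal.homogeneous_span _ _ fun _ hf => ⟨1, hf.1⟩

lemma map_linearPullback_pointIdeal_le {M N : ℕ} (φ : (Fin M → K) →ₗ[K] (Fin N → K))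
    (q : Fin M → K) : (pointIdeal (φ q)).map (linearPullback φ) ≤ pointIdeal q := by
  rw [pointIdeal, Ideal.map_span, Ideal.span_le]
  rintro _ ⟨f, ⟨hf, hfq⟩, rfl⟩
  exact Ideal.subset_span
    ⟨linearPullback_isHomogeneous φ hf, (eval_linearPullback φ f q).trans hfq⟩

lemma map_linearPullback_pointIdeal_pow_le {M N : ℕ} (φ : (Fin M → K) →ₗ[K] (Fin N → K))
    (q : Fin M → K) (m : ℕ) :
    (pointIdeal (φ q) ^ m).map (linearPullback φ) ≤ pointIdeal q ^ m := by
  rw [Ideal.map_pow]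
  exact Ideal.pow_right_mono (map_linearPullback_pointIdeal_le φ q) m

lemma idealOfVars_le_pointIdeal_sup {N : ℕ} {p q : Fin N → K} (hq : ∀ c : K, q ≠ c • p) :
    idealOfVars (Fin N) K ≤ pointIdeal p ⊔ pointIdeal q := by
  obtain ⟨π, hπp, hπq⟩ := exists_linearMap_apply_eq_zero_apply_eq_self hq
  rw [Ideal.span_le]
  rintro _ ⟨k, rfl⟩
  have hhom := linearPullback_isHomogeneous π (isHomogeneous_X K k)
  rw [← add_sub_cancel (linearPullback π (X k)) (X k)]
  refine Submodule.add_mem_sup (Ideal.subset_span ⟨hhom, ?_⟩)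
    (Ideal.subset_span ⟨(isHomogeneous_X K k).sub hhom, ?_⟩)
  · rw [eval_linearPullback, hπp, eval_X, Pi.zero_apply]
  · rw [map_sub, eval_linearPullback, hπq, sub_self]

lemma pointIdeal_single_zero (n : ℕ) :
    pointIdeal (Pi.single 0 1 : Fin (n + 1) → K) =
      (idealOfVars (Fin n) K).map (rename Fin.succ) := by
  rw [Ideal.map_span, ← Set.range_comp]
  refine le_antisymm (Ideal.span_le.2 ?_) (Ideal.span_mono ?_)
  · rintro f ⟨hf, hf0⟩
    rw [← mem_homogeneousSubmodule, homogeneousSubmodule_one_eq_span_X,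
      Submodule.mem_span_range_iff_exists_fun] at hf
    obtain ⟨c, rfl⟩ := hf
    have hc : c 0 = 0 := by
      simpa [Fin.sum_univ_succ] using hf0
    rw [Fin.sum_univ_succ, hc, zero_smul, zero_add]
    refine sum_mem fun i _ => Submodule.smul_of_tower_mem _ _ (Ideal.subset_span ⟨i, ?_⟩)
    exact rename_X _ _
  · rintro _ ⟨i, rfl⟩
    simp [isHomogeneous_X]

lemma mem_pointIdeal_single_zero_pow_iff {n m : ℕ} {f : MvPolynomial (Fin (n + 1)) K} :
    f ∈ pointIdeal (Pi.single 0 1 : Fin (n + 1) → K) ^ m ↔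
      ∀ d ∈ f.support, m ≤ d.tail.degree := by
  rw [pointIdeal_single_zero, ← Ideal.map_pow, pow_idealOfVars_eq_span, Ideal.map_span,
    Set.image_image]
  simp only [rename_monomial]
  rw [← Set.image_image (fun d => monomial d (1 : K)), mem_ideal_span_monomial_image]
  simp only [Set.exists_mem_image, mapDomain_succ_le_iff]
  refine forall₂_congr fun d _ => ⟨?_, fun h => ?_⟩
  · rintro ⟨e, he, hed⟩
    exact he ▸ Finsupp.degree_mono hed
  · obtain ⟨e, hed, he⟩ := Finsupp.exists_le_degree_eq _ m h
    exact ⟨e, he, hed⟩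

lemma hilbFn_pointIdeal_single_zero_pow_succ (n k t : ℕ) :
    hilbFn K (pointIdeal (Pi.single 0 1 : Fin (n + 1) → K) ^ (k + 1)) t =
      (min k t + n).choose n := by
  have hforms : homogeneousSubmodule (Fin (n + 1)) K t = restrictSupport K {d | d.degree = t} :=
    homogeneousSubmodule_eq_finsupp_supported _ _ _
  have hpiece : homogeneousSubmodule (Fin (n + 1)) K t ⊓
      (pointIdeal (Pi.single 0 1 : Fin (n + 1) → K) ^ (k + 1)).restrictScalars K =
      restrictSupport K {d | d.degree = t ∧ k + 1 ≤ d.tail.degree} := by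
    ext f
    rw [hforms, Submodule.mem_inf, Submodule.restrictScalars_mem,
      mem_pointIdeal_single_zero_pow_iff]
    exact Set.subset_inter_iff.symm
  have hdiff : {d : Fin (n + 1) →₀ ℕ | d.degree = t} \
      {d | d.degree = t ∧ k + 1 ≤ d.tail.degree} = {d | d.degree = t ∧ d.tail.degree ≤ k} := by
    ext d
    simp only [Set.mem_sdiff, Set.mem_ofPred_eq]
    lia
  rw [hilbFn, gradedDim, hpiece, hforms, finrank_restrictSupport, finrank_restrictSupport,
    ← Set.ncard_sdiff (fun d hd => hd.1) ((Finsupp.finite_of_degree_eq t).subset fun d hd => hd.1),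
    hdiff, ncard_degree_eq_and_degree_tail_le, ncard_degree_le]

lemma gradedDim_pointIdeal_pow_le {N : ℕ} (A : (Fin N → K) ≃ₗ[K] (Fin N → K)) (q : Fin N → K)
    (m t : ℕ) :
    gradedDim K (pointIdeal (A q) ^ m) t ≤ gradedDim K (pointIdeal q ^ m) t := by
  have hinv : A.toLinearMap ∘ₗ A.symm.toLinearMap = LinearMap.id := A.comp_symm
  have hinj : Function.Injective (linearPullback A.toLinearMap) :=
    (linearPullback_leftInverse hinv).injective
  have : FiniteDimensional K
      ↥(homogeneousSubmodule (Fin N) K t ⊓ (pointIdeal q ^ m).restrictScalars K) :=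
    Submodule.finiteDimensional_of_le inf_le_left
  refine LinearMap.finrank_le_finrank_of_injective
    (f := (linearPullback A.toLinearMap).toLinearMap.restrict fun f hf =>
      ⟨linearPullback_isHomogeneous _ hf.1,
        map_linearPullback_pointIdeal_pow_le _ q m (Ideal.mem_map_of_mem _ hf.2)⟩) ?_
  exact fun f g hfg => Subtype.ext (hinj (congrArg Subtype.val hfg))

lemma hilbFn_pointIdeal_pow_succ {n : ℕ} {p : Fin (n + 1) → K} (hp : p ≠ 0) (k t : ℕ) :
    hilbFn K (pointIdeal p ^ (k + 1)) t = (min k t + n).choose n := by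
  obtain ⟨A, rfl⟩ := exists_linearEquiv_apply_eq (K := K)
    (x := (Pi.single 0 1 : Fin (n + 1) → K)) (by simp) hp
  have hdim := (gradedDim_pointIdeal_pow_le A (Pi.single 0 1) (k + 1) t).antisymm
    (by simpa only [A.symm_apply_apply] using
      gradedDim_pointIdeal_pow_le A.symm (A (Pi.single 0 1)) (k + 1) t)
  rw [hilbFn, hdim, ← hilbFn, hilbFn_pointIdeal_single_zero_pow_succ]

lemma hilbFn_pointIdeal_pow_le {n m : ℕ} {p : Fin (n + 1) → K} (hp : p ≠ 0) (hm : 0 < m) (t : ℕ) :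
    hilbFn K (pointIdeal p ^ m) t ≤ (m + n - 1).choose n := by
  obtain ⟨k, rfl⟩ := Nat.exists_eq_add_one.2 hm
  rw [hilbFn_pointIdeal_pow_succ hp, Nat.add_right_comm, Nat.add_sub_cancel]
  exact Nat.choose_le_choose n (Nat.add_le_add_right (min_le_left k t) n)

lemma hilbFn_pointIdeal_pow_eq_iff {n m : ℕ} {p : Fin (n + 1) → K} (hp : p ≠ 0) (hm : 0 < m)
    (t : ℕ) :
    hilbFn K (pointIdeal p ^ m) t = (m + n - 1).choose n ↔ n = 0 ∨ m ≤ t + 1 := by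
  obtain ⟨k, rfl⟩ := Nat.exists_eq_add_one.2 hm
  rw [hilbFn_pointIdeal_pow_succ hp, Nat.add_right_comm, Nat.add_sub_cancel,
    Nat.add_le_add_iff_right]
  obtain rfl | hn := eq_or_ne n 0
  · simp
  · rw [(strictMono_add_choose hn).injective.eq_iff, min_eq_left_iff, or_iff_right hn]

end PointIdeal

section FatPoints

variable {K : Type} [Field K] {n s : ℕ}

lemma hilbFn_fatIdeal_eq_fatMult_iff {p : Fin s → Fin (n + 1) → K} (hp : ∀ i, p i ≠ 0)
    {m : Fin s → ℕ} (hm : ∀ i, 0 < m i) (t : ℕ) :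
    hilbFn K (fatIdeal p m) t = fatMult n m ↔
      SurjectsInDegree (fun i => pointIdeal (p i) ^ m i) t ∧ ∀ i, n = 0 ∨ m i ≤ t + 1 := by
  have hle := hilbFn_iInf_le_sum (fun i => pointIdeal (p i) ^ m i) t
  have hlocal : ∀ i ∈ Finset.univ,
      hilbFn K (pointIdeal (p i) ^ m i) t ≤ (m i + n - 1).choose n :=
    fun i _ => hilbFn_pointIdeal_pow_le (hp i) (hm i) t
  have hsum : ∑ i, hilbFn K (pointIdeal (p i) ^ m i) t = fatMult n m ↔
      ∀ i, n = 0 ∨ m i ≤ t + 1 := by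
    rw [fatMult, Finset.sum_eq_sum_iff_of_le hlocal]
    simp only [hilbFn_pointIdeal_pow_eq_iff (hp _) (hm _), Finset.mem_univ, true_imp_iff]
  rw [← hilbFn_iInf_eq_sum_iff, ← hsum, fatIdeal]
  have hsum_le : ∑ i, hilbFn K (pointIdeal (p i) ^ m i) t ≤ fatMult n m := Finset.sum_le_sum hlocal
  exact ⟨fun h => ⟨by lia, by lia⟩, fun h => h.1.trans h.2⟩

lemma surjectsInDegree_pointIdeal_pow {N : ℕ} {p : Fin s → Fin N → K} (hp : ProjDistinct p)
    (m : Fin s → ℕ) :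
    SurjectsInDegree (fun i => pointIdeal (p i) ^ m i) (∑ i, ∑ j, (m i + m j)) := by
  refine surjectsInDegree_of_pow_le_sup
    (fun i => ideal_pow_isHomogeneous (pointIdeal_isHomogeneous (p i)) (m i))
    (k := fun i j => m i + m j) (fun i j hij => ?_) fun i => ?_
  · exact (Ideal.pow_right_mono (idealOfVars_le_pointIdeal_sup (hp.2 j i hij.symm)) _).trans
      Ideal.sup_pow_add_le_pow_sup_pow
  · exact (Finset.sum_le_sum_of_subset (Finset.erase_subset _ _)).trans
      (Finset.single_le_sum (f := fun i => ∑ j, (m i + m j)) (fun _ _ => Nat.zero_le _)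
        (Finset.mem_univ i))

lemma hilbFn_fatIdeal_regFat {p : Fin s → Fin (n + 1) → K} (hp : ProjDistinct p)
    {m : Fin s → ℕ} (hm : ∀ i, 0 < m i) :
    hilbFn K (fatIdeal p m) (regFat K p m) = fatMult n m := by
  refine Nat.sInf_mem (s := {t | hilbFn K (fatIdeal p m) t = fatMult n m})
    ⟨∑ i, ∑ j, (m i + m j), (hilbFn_fatIdeal_eq_fatMult_iff hp.1 hm _).2
      ⟨surjectsInDegree_pointIdeal_pow hp m, fun i => Or.inr ?_⟩⟩
  calc m i ≤ m i + m i := Nat.le_add_right _ _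
    _ ≤ ∑ j, (m i + m j) := Finset.single_le_sum (f := fun j => m i + m j)
      (fun _ _ => Nat.zero_le _) (Finset.mem_univ i)
    _ ≤ ∑ i, ∑ j, (m i + m j) := Finset.single_le_sum (f := fun i => ∑ j, (m i + m j))
      (fun _ _ => Nat.zero_le _) (Finset.mem_univ i)
    _ ≤ ∑ i, ∑ j, (m i + m j) + 1 := Nat.le_succ _

lemma ProjDistinct.map {M N : ℕ} {φ : (Fin M → K) →ₗ[K] (Fin N → K)} (hφ : Function.Injective φ)
    {q : Fin s → Fin M → K} (hq : ProjDistinct q) : ProjDistinct fun i => φ (q i) :=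
  ⟨fun i h => hq.1 i (hφ (h.trans φ.map_zero.symm)),
    fun i j hij c h => hq.2 i j hij c (hφ (h.trans (φ.map_smul c _).symm))⟩

theorem stmt19_general {r : ℕ} (φ : (Fin (r + 1) → K) →ₗ[K] (Fin (n + 1) → K))
    (hφ : Function.Injective φ) (q : Fin s → Fin (r + 1) → K) (hq : ProjDistinct q)
    (m : Fin s → ℕ) (hm : ∀ i, 0 < m i) :
    regFat K q m ≤ regFat K (fun i => φ (q i)) m := by
  obtain ⟨θ, hθ⟩ := φ.exists_leftInverse_of_injective (LinearMap.ker_eq_bot.2 hφ)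
  have hrn : r ≤ n := by simpa using LinearMap.finrank_le_finrank_of_injective hφ
  have hφq := hq.map hφ
  obtain ⟨hsurj, hdeg⟩ := (hilbFn_fatIdeal_eq_fatMult_iff hφq.1 hm _).1
    (hilbFn_fatIdeal_regFat hφq hm)
  refine Nat.sInf_le ((hilbFn_fatIdeal_eq_fatMult_iff hq.1 hm _).2 ⟨?_, fun i => ?_⟩)
  · exact hsurj.of_map_linearPullback_le (linearPullback_leftInverse hθ)
      fun i => map_linearPullback_pointIdeal_pow_le φ (q i) (m i)
  · exact (hdeg i).imp_left fun hn => Nat.eq_zero_of_le_zero (hrn.trans_eq hn)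

end FatPoints

/-- Proposition 3.4: a lower bound for `reg(Z_α)` transfers to `reg(Z)`. -/
theorem stmt19 {K : Type} [Field K] [IsAlgClosed K] {n r s : ℕ} (hr : r ≤ n)
    (φ : (Fin (r + 1) → K) →ₗ[K] (Fin (n + 1) → K)) (hφ : Function.Injective φ)
    (q : Fin s → Fin (r + 1) → K) (hq : ProjDistinct q)
    (m : Fin s → ℕ) (hm : ∀ i, 0 < m i)
    (p : Fin s → Fin (n + 1) → K) (hp : ∀ i, p i = φ (q i))
    (b : ℕ) (hb : b < regFat K q m) :
    b < regFat K p m := by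
  obtain rfl : p = fun i => φ (q i) := funext hp
  exact hb.trans_le (stmt19_general φ hφ q hq m hm)
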